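/- arXiv:2304.04454 — 7 statements merged into one kernel-verified Lean document; each statement's English description precedes it below -/
import Mathlib

section
/- Let T > 0, let α > 0 be a non-integer real number, let m = ⌈α⌉, and let f : ℝ → ℝ be a nonconstant, T-periodic, m-times continuously differentiable function. Then the Caputo fractional derivative g(t) = (1/Γ(m−α)) ∫_0^t (t−τ)^{m−α−1} f^{(m)}(τ) dτ (for t ≥ 0) is not T-periodic on [0,∞); that is, it is NOT the case that g(t+T) = g(t) for all t ≥ 0. -/
open Real MeasureTheory intervalIntegral

/-- A periodic `C^n` function whose `n`-th derivative vanishes is constant. -/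
lemma eq_of_periodic_of_iteratedDeriv_eq_zero {T : ℝ} (hT : 0 < T) (n : ℕ) {f : ℝ → ℝ}
    (hper : Function.Periodic f T) (hf : ContDiff ℝ n f)
    (h : ∀ x, iteratedDeriv n f x = 0) (x y : ℝ) : f x = f y := by
  induction n generalizing f x y with
  | zero => simp_all
  | succ n ih =>
    have hd : Differentiable ℝ f := hf.differentiable (by simp)
    have hper' : Function.Periodic (deriv f) T := fun x => by
      rw [← deriv_comp_add_const, show (fun x => f (x + T)) = f from funext hper]
    have hf' : ContDiff ℝ n (deriv f) := by
      rw [Nat.cast_succ, contDiff_succ_iff_deriv] at hf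
      exact hf.2.2
    have hconst := ih hper' hf' (by simpa only [iteratedDeriv_succ'] using h)
    obtain ⟨c, -, hc⟩ := exists_deriv_eq_zero hT hd.continuous.continuousOn
      (by simpa using (hper 0).symm)
    exact is_const_of_deriv_eq_zero hd (fun z => (hconst z c).trans hc) x y

lemma continuousOn_add_rpow {T t : ℝ} (ht : 0 < t) (p : ℝ) :
    ContinuousOn (fun u : ℝ => (t + u) ^ p) (Set.Icc 0 T) := by
  refine ContinuousOn.rpow_const (by fun_prop) fun u hu => Or.inl ?_
  have := hu.1
  positivity

lemma intervalIntegrable_add_rpow_mul {T t : ℝ} (hT : 0 < T) (ht : 0 < t) (p : ℝ) {k : ℝ → ℝ}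
    (hk : Continuous k) :
    IntervalIntegrable (fun u : ℝ => (t + u) ^ p * k u) volume 0 T := by
  apply ContinuousOn.intervalIntegrable
  rw [Set.uIcc_of_le hT.le]
  exact (continuousOn_add_rpow ht p).mul hk.continuousOn

lemma hasDerivAt_integral_add_rpow_mul {T t p : ℝ} (hT : 0 < T) (ht : 0 < t) (hp : p < 0)
    {k : ℝ → ℝ} (hk : Continuous k) :
    HasDerivAt (fun t : ℝ => ∫ u in (0 : ℝ)..T, (t + u) ^ p * k u)
      (∫ u in (0 : ℝ)..T, p * (t + u) ^ (p - 1) * k u) t := by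
  have hint (q : ℝ) {s : ℝ} (hs : 0 < s) := intervalIntegrable_add_rpow_mul hT hs q hk
  refine (hasDerivAt_integral_of_dominated_loc_of_deriv_le
    (F := fun t u => (t + u) ^ p * k u) (F' := fun t u => p * (t + u) ^ (p - 1) * k u)
    (s := Set.Ioi (t / 2)) (bound := fun u => |p| * (t / 2) ^ (p - 1) * |k u|)
    (Ioi_mem_nhds (by linarith)) ?_ (hint p ht) ?_ ?_ ?_ ?_).2
  · filter_upwards [Ioi_mem_nhds ht] with s hs
    exact (hint p hs).def'.aestronglyMeasurable
  · simpa only [mul_assoc] using ((hint (p - 1) ht).const_mul p).def'.aestronglyMeasurable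
  · refine .of_forall fun u hu s hs => ?_
    rw [Set.uIoc_of_le hT.le] at hu
    have hs' : t / 2 < s := hs
    have hsu : t / 2 ≤ s + u := by linarith [hu.1]
    have h0 : 0 < s + u := by linarith
    rw [norm_mul, norm_mul, Real.norm_eq_abs, Real.norm_eq_abs, Real.norm_eq_abs,
      abs_of_pos (rpow_pos_of_pos h0 _)]
    gcongr ?_ * ?_ * ?_
    exact rpow_le_rpow_of_nonpos (by linarith) hsu (by linarith)
  · exact (continuous_const.mul hk.abs).intervalIntegrable _ _
  · refine .of_forall fun u hu s hs => ?_
    rw [Set.uIoc_of_le hT.le] at hu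
    have hs' : t / 2 < s := hs
    have h0 : s + u ≠ 0 := by linarith [hu.1]
    simpa using (((hasDerivAt_id s).add_const u).rpow_const (p := p) (Or.inl h0)).mul_const (k u)

lemma integral_add_rpow_sub_nat_mul_eq_zero {T p : ℝ} (hT : 0 < T) (hp : p < 0)
    {k : ℝ → ℝ} (hk : Continuous k)
    (h : ∀ t : ℝ, 0 < t → ∫ u in (0 : ℝ)..T, (t + u) ^ p * k u = 0) (n : ℕ) (t : ℝ) (ht : 0 < t) :
    ∫ u in (0 : ℝ)..T, (t + u) ^ (p - n) * k u = 0 := by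
  induction n generalizing t with
  | zero => simpa using h t ht
  | succ n ih =>
    have hpn : p - n < 0 := by linarith [n.cast_nonneg (α := ℝ)]
    have hzero : HasDerivAt (fun t : ℝ => ∫ u in (0 : ℝ)..T, (t + u) ^ (p - n) * k u) 0 t := by
      refine (hasDerivAt_const t (0 : ℝ)).congr_of_eventuallyEq ?_
      filter_upwards [Ioi_mem_nhds ht] with s hs using ih s hs
    have key := (hasDerivAt_integral_add_rpow_mul hT ht hpn hk).unique hzero
    simp only [mul_assoc, intervalIntegral.integral_const_mul] at key
    rw [Nat.cast_succ, ← sub_sub]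
    exact (mul_eq_zero.1 key).resolve_left hpn.ne

/-- A continuous function on `[0, T]` is determined by its generalized Stieltjes transform. -/
lemma eq_zero_of_integral_add_rpow_mul_eq_zero {T p : ℝ} (hT : 0 < T) (hp : p < 0)
    {k : ℝ → ℝ} (hk : Continuous k)
    (h : ∀ t : ℝ, 0 < t → ∫ u in (0 : ℝ)..T, (t + u) ^ p * k u = 0) :
    ∀ u ∈ Set.Icc 0 T, k u = 0 := by
  have hw : ContinuousOn (fun u : ℝ => (1 + u) ^ p) (Set.Icc 0 T) :=
    continuousOn_add_rpow one_pos p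
  have hinv : ContinuousOn (fun u : ℝ => (1 + u)⁻¹) (Set.Icc 0 T) :=
    ContinuousOn.inv₀ (by fun_prop) fun u hu => by linarith [hu.1]
  have hII {φ : ℝ → ℝ} (hφ : ContinuousOn φ (Set.Icc 0 T)) : IntervalIntegrable φ volume 0 T :=
    ContinuousOn.intervalIntegrable (by rwa [Set.uIcc_of_le hT.le])
  have hwk {φ : ℝ → ℝ} (hφ : ContinuousOn φ (Set.Icc 0 T)) :
      IntervalIntegrable (fun u => (1 + u) ^ p * k u * φ u) volume 0 T :=
    hII ((hw.mul hk.continuousOn).mul hφ)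
  have hpolyc (P : Polynomial ℝ) :
      ContinuousOn (fun u : ℝ => P.eval (1 + u)⁻¹) (Set.Icc 0 T) :=
    P.continuous.comp_continuousOn hinv
  have hpoly (P : Polynomial ℝ) :
      ∫ u in (0 : ℝ)..T, (1 + u) ^ p * k u * P.eval (1 + u)⁻¹ = 0 := by
    induction P using Polynomial.induction_on' with
    | add P Q hP hQ =>
      simp only [Polynomial.eval_add, mul_add]
      rw [intervalIntegral.integral_add (hwk (hpolyc P)) (hwk (hpolyc Q)), hP, hQ, add_zero]
    | monomial n a =>
      have hn := congrArg (a * ·)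
        (integral_add_rpow_sub_nat_mul_eq_zero hT hp hk h n 1 one_pos)
      simp only [← intervalIntegral.integral_const_mul, mul_zero] at hn
      refine (intervalIntegral.integral_congr fun u hu => ?_).trans hn
      rw [Set.uIcc_of_le hT.le] at hu
      have hu0 : 0 < 1 + u := by linarith [hu.1]
      simp only [Polynomial.eval_monomial, rpow_sub hu0, rpow_natCast, inv_pow]
      ring
  by_contra! hne
  obtain ⟨v, hv, hkv⟩ := hne
  set I := ∫ u in (0 : ℝ)..T, (1 + u) ^ p * k u * k u
  set C := ∫ u in (0 : ℝ)..T, (1 + u) ^ p * |k u|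
  have hI : 0 < I := by
    refine intervalIntegral.integral_pos hT ((hw.mul hk.continuousOn).mul hk.continuousOn)
      (fun u hu => ?_) ⟨v, hv, ?_⟩
    · have := hu.1
      rw [mul_assoc]
      exact mul_nonneg (by positivity) (mul_self_nonneg _)
    · have := hv.1
      rw [mul_assoc]
      exact mul_pos (by positivity) (mul_self_pos.2 hkv)
  have hC : 0 ≤ C := by
    refine intervalIntegral.integral_nonneg hT.le fun u hu => ?_
    have := hu.1
    positivity
  have hφ : ContinuousOn (fun y : ℝ => k (y⁻¹ - 1)) (Set.Icc (1 + T)⁻¹ 1) := by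
    refine hk.comp_continuousOn (ContinuousOn.sub (continuousOn_inv₀.mono fun y hy => ?_)
      continuousOn_const)
    exact ((inv_pos.2 (by linarith)).trans_le hy.1).ne'
  obtain ⟨P, hP⟩ := exists_polynomial_near_of_continuousOn _ _ _ hφ (I / (C + 1)) (by positivity)
  have hle : I ≤ I / (C + 1) * C := by
    calc I = ∫ u in (0 : ℝ)..T,
          ((1 + u) ^ p * k u * k u - (1 + u) ^ p * k u * P.eval (1 + u)⁻¹) := by
          rw [intervalIntegral.integral_sub (hwk hk.continuousOn) (hwk (hpolyc P)), hpoly, sub_zero]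
      _ ≤ ∫ u in (0 : ℝ)..T, I / (C + 1) * ((1 + u) ^ p * |k u|) := by
          refine intervalIntegral.integral_mono_on hT.le
            ((hwk hk.continuousOn).sub (hwk (hpolyc P)))
            (hII (continuousOn_const.mul (hw.mul hk.abs.continuousOn))) fun u hu => ?_
          have hu0 : 0 < 1 + u := by linarith [hu.1]
          have hb := hP (1 + u)⁻¹ ⟨inv_anti₀ hu0 (by linarith [hu.2]),
            inv_le_one_of_one_le₀ (by linarith [hu.1])⟩
          rw [inv_inv, add_sub_cancel_left, abs_sub_comm] at hb
          calc _ = (1 + u) ^ p * (k u * (k u - P.eval (1 + u)⁻¹)) := by ring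
            _ ≤ (1 + u) ^ p * (|k u| * (I / (C + 1))) := by
              refine mul_le_mul_of_nonneg_left ((le_abs_self _).trans ?_) (by positivity)
              rw [abs_mul]
              gcongr
            _ = _ := by ring
      _ = I / (C + 1) * C := intervalIntegral.integral_const_mul _ _
  rw [div_mul_eq_mul_div, le_div_iff₀ (by positivity)] at hle
  linarith

/-- If the convolution of a periodic function with `t ^ q` over `[0, t]` takes the same value at
`t` and `t + T`, then the contribution of the preceding period vanishes. -/
lemma integral_add_rpow_mul_comp_neg_eq_zero {T q t : ℝ} (hq : -1 < q)
    {h : ℝ → ℝ} (hc : Continuous h) (hper : Function.Periodic h T)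
    (heq : ∫ τ in (0 : ℝ)..(t + T), (t + T - τ) ^ q * h τ =
      ∫ τ in (0 : ℝ)..t, (t - τ) ^ q * h τ) :
    ∫ u in (0 : ℝ)..T, (t + u) ^ q * h (-u) = 0 := by
  have hII (a b : ℝ) : IntervalIntegrable (fun τ : ℝ => (t - τ) ^ q * h τ) volume a b := by
    have := (intervalIntegrable_rpow' hq (a := t - a) (b := t - b)).comp_sub_left t
    simp only [sub_sub_cancel] at this
    exact this.mul_continuousOn hc.continuousOn
  have hshift : ∫ τ in (0 : ℝ)..(t + T), (t + T - τ) ^ q * h τ =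
      ∫ τ in (-T)..t, (t - τ) ^ q * h τ := by
    have := intervalIntegral.integral_comp_add_right (a := -T) (b := t)
      (fun τ : ℝ => (t + T - τ) ^ q * h τ) T
    rw [neg_add_cancel] at this
    rw [← this]
    refine intervalIntegral.integral_congr fun τ _ => ?_
    simp only [hper τ, add_sub_add_right_eq_sub]
  have hneg := intervalIntegral.integral_comp_neg (a := 0) (b := T)
    (fun τ : ℝ => (t - τ) ^ q * h τ)
  simp only [sub_neg_eq_add, neg_zero] at hneg
  rw [hneg]
  have hadd := intervalIntegral.integral_add_adjacent_intervals (hII (-T) 0) (hII 0 t)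
  rw [← hshift, heq] at hadd
  linarith

/-- The Caputo fractional derivative of a nonconstant `T`-periodic,
`m`-times continuously differentiable function is not `T`-periodic on `[0, ∞)`. -/
theorem caputo_not_periodic
    (T α : ℝ) (hT : 0 < T) (hα : 0 < α) (hαZ : ∀ n : ℤ, α ≠ (n : ℝ))
    (m : ℕ) (hm : m = ⌈α⌉₊)
    (f : ℝ → ℝ) (hper : ∀ t : ℝ, f (t + T) = f t)
    (hnc : ∃ t₁ t₂ : ℝ, f t₁ ≠ f t₂)
    (hsm : ContDiff ℝ m f)
    (g : ℝ → ℝ)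
    (hg : ∀ t : ℝ, g t =
      (1 / Real.Gamma ((m : ℝ) - α)) *
        ∫ τ in (0:ℝ)..t, (t - τ) ^ ((m : ℝ) - α - 1) * iteratedDeriv m f τ) :
    ¬ (∀ t : ℝ, 0 ≤ t → g (t + T) = g t) := by
  intro hgT
  have hlt : α < m := by
    refine lt_of_le_of_ne (hm ▸ Nat.le_ceil α) ?_
    exact_mod_cast hαZ m
  have hlt' : (m : ℝ) < α + 1 := hm ▸ Nat.ceil_lt_add_one hα.le
  have hΓ : 1 / Real.Gamma ((m : ℝ) - α) ≠ 0 :=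
    one_div_ne_zero (Real.Gamma_pos_of_pos (by linarith)).ne'
  have hc : Continuous (iteratedDeriv m f) := hsm.continuous_iteratedDeriv m le_rfl
  have hperm : Function.Periodic (iteratedDeriv m f) T := fun t => by
    have := congrFun (iteratedDeriv_comp_add_const m f T) t
    rw [show (fun z => f (z + T)) = f from funext hper] at this
    exact this.symm
  have hzero := eq_zero_of_integral_add_rpow_mul_eq_zero hT (p := (m : ℝ) - α - 1) (by linarith)
    (hc.comp continuous_neg) fun t ht =>
      integral_add_rpow_mul_comp_neg_eq_zero (by linarith) hc hperm <| by
        have := hgT t ht.le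
        rw [hg, hg] at this
        exact mul_left_cancel₀ hΓ this
  obtain ⟨t₁, t₂, hne⟩ := hnc
  refine hne (eq_of_periodic_of_iteratedDeriv_eq_zero hT m hper hsm (fun x => ?_) t₁ t₂)
  obtain ⟨y, hy, hxy⟩ := hperm.exists_mem_Ico hT x (-T)
  rw [hxy]
  simpa using hzero (-y) ⟨by linarith [hy.2], by linarith [hy.1]⟩
end

section
/- Let T > 0, let α > 0 be a non-integer real number, let m = ⌈α⌉, and let f : ℝ → ℝ be a nonconstant, T-periodic, m-times continuously differentiable function. Define the Riemann–Liouville fractional derivative g(t) as the m-th iterated derivative, evaluated at t, of the function s ↦ (1/Γ(m−α)) ∫_0^s (s−τ)^{m−α−1} f(τ) dτ. Then g is not T-periodic on (0,∞); that is, it is NOT the case that g(t+T) = g(t) for all t > 0. -/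
open Real MeasureTheory intervalIntegral

/-- Dilations by points of a bounded set keep a continuous function bounded on `[0, 1]`. -/
lemma exists_bound_comp_dilation {f : ℝ → ℝ} (hf : Continuous f) (s₀ : ℝ) :
    ∃ C, ∀ x ∈ Set.uIoc (0 : ℝ) 1, ∀ s ∈ Metric.ball s₀ 1, ‖f (s * x)‖ ≤ C := by
  have hK : IsCompact (Metric.closedBall s₀ 1 ×ˢ Set.Icc (0 : ℝ) 1) :=
    (isCompact_closedBall s₀ 1).prod isCompact_Icc
  obtain ⟨C, hC⟩ := hK.exists_bound_of_continuousOn (f := fun p : ℝ × ℝ => f (p.1 * p.2))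
    (by fun_prop)
  refine ⟨C, fun x hx s hs => hC (s, x) ⟨Metric.ball_subset_closedBall hs, ?_⟩⟩
  rw [Set.uIoc_of_le zero_le_one] at hx
  exact Set.Ioc_subset_Icc_self hx

lemma continuous_integral_mul_comp_dilation {w f : ℝ → ℝ}
    (hw : IntervalIntegrable w volume 0 1) (hf : Continuous f) :
    Continuous fun s : ℝ => ∫ x in (0 : ℝ)..1, w x * f (s * x) := by
  refine continuous_iff_continuousAt.2 fun s₀ => ?_
  obtain ⟨C, hC⟩ := exists_bound_comp_dilation hf s₀
  refine intervalIntegral.continuousAt_of_dominated_interval (bound := fun x => ‖w x‖ * C)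
    ?_ ?_ (hw.norm.mul_const C) ?_
  · exact .of_forall fun s => (hw.mul_continuousOn (g := fun x => f (s * x)) (by fun_prop))
      |>.aestronglyMeasurable_restrict_uIoc
  · filter_upwards [Metric.ball_mem_nhds s₀ one_pos] with s hs
    refine .of_forall fun x hx => ?_
    rw [norm_mul]
    exact mul_le_mul_of_nonneg_left (hC x hx s hs) (norm_nonneg _)
  · exact .of_forall fun x _ => by fun_prop

lemma hasDerivAt_integral_mul_comp_dilation {w f : ℝ → ℝ}
    (hw : IntervalIntegrable w volume 0 1) (hf : ContDiff ℝ 1 f) (s₀ : ℝ) :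
    HasDerivAt (fun s : ℝ => ∫ x in (0 : ℝ)..1, w x * f (s * x))
      (∫ x in (0 : ℝ)..1, w x * x * deriv f (s₀ * x)) s₀ := by
  have hf' : Continuous (deriv f) := hf.continuous_deriv le_rfl
  have hfc : Continuous f := hf.continuous
  have hwx : IntervalIntegrable (fun x => w x * x) volume 0 1 :=
    hw.mul_continuousOn continuousOn_id
  obtain ⟨C, hC⟩ := exists_bound_comp_dilation hf' s₀
  refine (intervalIntegral.hasDerivAt_integral_of_dominated_loc_of_deriv_le
    (F := fun s x => w x * f (s * x)) (F' := fun s x => w x * x * deriv f (s * x))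
    (bound := fun x => ‖w x * x‖ * C) (Metric.ball_mem_nhds s₀ one_pos) ?_ ?_ ?_ ?_
    (hwx.norm.mul_const C) ?_).2
  · exact .of_forall fun s => (hw.mul_continuousOn (g := fun x => f (s * x)) (by fun_prop))
      |>.aestronglyMeasurable_restrict_uIoc
  · exact hw.mul_continuousOn (by fun_prop)
  · exact (hwx.mul_continuousOn (g := fun x => deriv f (s₀ * x)) (by fun_prop))
      |>.aestronglyMeasurable_restrict_uIoc
  · refine .of_forall fun x hx s hs => ?_
    rw [norm_mul]
    exact mul_le_mul_of_nonneg_left (hC x hx s hs) (norm_nonneg _)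
  · refine .of_forall fun x _ s _ => ?_
    have hfs : HasDerivAt f (deriv f (s * x)) (s * x) :=
      (hf.differentiable one_ne_zero _).hasDerivAt
    have h := (hfs.comp s (hasDerivAt_mul_const x)).const_mul (w x)
    exact h.congr_deriv (by ring)

lemma contDiff_integral_mul_comp_dilation (n : ℕ) {w f : ℝ → ℝ}
    (hw : IntervalIntegrable w volume 0 1) (hf : ContDiff ℝ n f) :
    ContDiff ℝ n fun s : ℝ => ∫ x in (0 : ℝ)..1, w x * f (s * x) := by
  induction n generalizing w f with
  | zero =>
    exact contDiff_zero.2 (continuous_integral_mul_comp_dilation hw hf.continuous)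
  | succ n ih =>
    have hd := hasDerivAt_integral_mul_comp_dilation hw
      (hf.of_le (by exact_mod_cast Nat.le_add_left 1 n))
    push_cast at hf ⊢
    rw [contDiff_succ_iff_deriv] at hf ⊢
    refine ⟨fun s => (hd s).differentiableAt, by simp, ?_⟩
    rw [funext fun s => (hd s).deriv]
    exact ih (hw.mul_continuousOn continuousOn_id) hf.2.2

lemma intervalIntegrable_sub_rpow {r : ℝ} (hr : -1 < r) (s a b : ℝ) :
    IntervalIntegrable (fun τ => (s - τ) ^ r) volume a b := by
  simpa using (intervalIntegrable_rpow' (a := s - a) (b := s - b) hr).comp_sub_left s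

lemma integral_sub_rpow_mul_eq {r s : ℝ} (hs : 0 < s) (f : ℝ → ℝ) :
    ∫ τ in (0 : ℝ)..s, (s - τ) ^ r * f τ =
      s ^ (r + 1) * ∫ x in (0 : ℝ)..1, (1 - x) ^ r * f (s * x) := by
  have h := intervalIntegral.mul_integral_comp_mul_left (a := 0) (b := 1)
    (f := fun τ => (s - τ) ^ r * f τ) s
  rw [mul_zero, mul_one] at h
  rw [← h, rpow_add_one hs.ne', mul_comm (s ^ r) s, mul_assoc,
    ← intervalIntegral.integral_const_mul (s ^ r)]
  congr 1
  refine intervalIntegral.integral_congr fun x hx => ?_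
  rw [Set.uIcc_of_le zero_le_one] at hx
  have : s - s * x = s * (1 - x) := by ring
  simp only [this, mul_rpow hs.le (sub_nonneg.2 hx.2), mul_assoc]

/-- The Riemann–Liouville integral of a `C^n` function is `C^n` away from the base point. -/
lemma contDiffAt_integral_sub_rpow_mul {n : ℕ} {r s : ℝ} (hr : -1 < r) (hs : 0 < s)
    {f : ℝ → ℝ} (hf : ContDiff ℝ n f) :
    ContDiffAt ℝ n (fun s : ℝ => ∫ τ in (0 : ℝ)..s, (s - τ) ^ r * f τ) s := by
  have h : ContDiffAt ℝ n (fun s : ℝ =>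
      s ^ (r + 1) * ∫ x in (0 : ℝ)..1, (1 - x) ^ r * f (s * x)) s :=
    (contDiffAt_rpow_const_of_ne hs.ne').mul
      (contDiff_integral_mul_comp_dilation n (intervalIntegrable_sub_rpow hr 1 0 1) hf).contDiffAt
  refine h.congr_of_eventuallyEq ?_
  filter_upwards [lt_mem_nhds hs] with x hx
  exact integral_sub_rpow_mul_eq hx f

lemma integral_sub_rpow_mul_add_period {r T t : ℝ} (hr : -1 < r) {f : ℝ → ℝ}
    (hf : Continuous f) (hper : ∀ t, f (t + T) = f t) :
    ∫ τ in (0 : ℝ)..t + T, (t + T - τ) ^ r * f τ =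
      (∫ τ in (0 : ℝ)..T, (t + T - τ) ^ r * f τ) + ∫ τ in (0 : ℝ)..t, (t - τ) ^ r * f τ := by
  have hi : ∀ a b, IntervalIntegrable (fun τ => (t + T - τ) ^ r * f τ) volume a b := fun a b =>
    (intervalIntegrable_sub_rpow hr _ a b).mul_continuousOn hf.continuousOn
  rw [← intervalIntegral.integral_add_adjacent_intervals (hi 0 T) (hi T (t + T))]
  congr 1
  have h := intervalIntegral.integral_comp_add_right (a := 0) (b := t)
    (fun τ => (t + T - τ) ^ r * f τ) T
  rw [zero_add] at h
  rw [← h]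
  simp only [hper, add_sub_add_right_eq_sub]

lemma hasDerivAt_integral_add_sub_rpow_mul {r T t : ℝ} (hT : 0 < T) (ht : 0 < t) {f : ℝ → ℝ}
    (hf : Continuous f) :
    HasDerivAt (fun t => ∫ τ in (0 : ℝ)..T, (t + T - τ) ^ r * f τ)
      (r * ∫ τ in (0 : ℝ)..T, (t + T - τ) ^ (r - 1) * f τ) t := by
  have hc : ∀ (q x : ℝ), 0 < x →
      ContinuousOn (fun τ => (x + T - τ) ^ q * f τ) (Set.uIcc 0 T) := fun q x hx => by
    refine ContinuousOn.mul (ContinuousOn.rpow_const (by fun_prop) fun τ hτ => Or.inl ?_)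
      hf.continuousOn
    rw [Set.uIcc_of_le hT.le] at hτ
    linarith [hτ.2]
  have hK : IsCompact (Set.Icc (t / 2) (2 * t) ×ˢ Set.Icc 0 T) := isCompact_Icc.prod isCompact_Icc
  obtain ⟨C, hC⟩ := hK.exists_bound_of_continuousOn
    (f := fun p : ℝ × ℝ => r * ((p.1 + T - p.2) ^ (r - 1) * f p.2)) (by
      refine continuousOn_const.mul (ContinuousOn.mul
        (ContinuousOn.rpow_const (by fun_prop) fun p hp => Or.inl ?_) (by fun_prop))
      linarith [hp.1.1, hp.2.2])
  rw [← intervalIntegral.integral_const_mul]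
  refine (intervalIntegral.hasDerivAt_integral_of_dominated_loc_of_deriv_le
    (F := fun x τ => (x + T - τ) ^ r * f τ)
    (F' := fun x τ => r * ((x + T - τ) ^ (r - 1) * f τ))
    (bound := fun _ => C) (Icc_mem_nhds (by linarith : t / 2 < t) (by linarith : t < 2 * t))
    ?_ ?_ ?_ ?_ intervalIntegrable_const ?_).2
  · filter_upwards [lt_mem_nhds ht] with x hx
    exact (hc r x hx).intervalIntegrable.aestronglyMeasurable_restrict_uIoc
  · exact (hc r t ht).intervalIntegrable
  · exact ((hc (r - 1) t ht).intervalIntegrable.const_mul r)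
      |>.aestronglyMeasurable_restrict_uIoc
  · refine .of_forall fun τ hτ x hx => hC (x, τ) ⟨hx, ?_⟩
    rw [Set.uIoc_of_le hT.le] at hτ
    exact Set.Ioc_subset_Icc_self hτ
  · refine .of_forall fun τ hτ x hx => ?_
    rw [Set.uIoc_of_le hT.le] at hτ
    have hpos : x + T - τ ≠ 0 := by linarith [hτ.2, hx.1]
    have h := ((((hasDerivAt_id x).add_const T).sub_const τ).rpow_const
      (p := r) (Or.inl hpos)).mul_const (f τ)
    exact h.congr_deriv (by simp only [id]; ring)

lemma iteratedDeriv_integral_add_sub_rpow_mul (n : ℕ) {r T : ℝ} (hT : 0 < T) {f : ℝ → ℝ}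
    (hf : Continuous f) {t : ℝ} (ht : 0 < t) :
    iteratedDeriv n (fun t => ∫ τ in (0 : ℝ)..T, (t + T - τ) ^ r * f τ) t =
      (∏ i ∈ Finset.range n, (r - i)) * ∫ τ in (0 : ℝ)..T, (t + T - τ) ^ (r - n) * f τ := by
  induction n generalizing t with
  | zero => simp
  | succ n ih =>
    rw [iteratedDeriv_succ, Filter.EventuallyEq.deriv_eq (f := fun t =>
      (∏ i ∈ Finset.range n, (r - i)) * ∫ τ in (0 : ℝ)..T, (t + T - τ) ^ (r - n) * f τ)]
    · rw [((hasDerivAt_integral_add_sub_rpow_mul hT ht hf).const_mul _).deriv,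
        Finset.prod_range_succ]
      push_cast
      rw [mul_assoc, sub_sub r]
    · filter_upwards [lt_mem_nhds ht] with x hx
      exact ih hx

lemma integral_add_sub_rpow_mul_eq_zero (n : ℕ) {r T : ℝ} (hr : r < 0) (hT : 0 < T) {f : ℝ → ℝ}
    (hf : Continuous f)
    (h : ∀ t, 0 < t → ∫ τ in (0 : ℝ)..T, (t + T - τ) ^ r * f τ = 0) {t : ℝ} (ht : 0 < t) :
    ∫ τ in (0 : ℝ)..T, (t + T - τ) ^ (r - n) * f τ = 0 := by
  have hd := iteratedDeriv_integral_add_sub_rpow_mul n (r := r) hT hf ht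
  have hz : (fun t => ∫ τ in (0 : ℝ)..T, (t + T - τ) ^ r * f τ) =ᶠ[nhds t] fun _ => 0 := by
    filter_upwards [lt_mem_nhds ht] with x hx using h x hx
  rw [hz.iteratedDeriv_eq, iteratedDeriv_fun_const_zero] at hd
  refine (mul_eq_zero.1 hd.symm).resolve_left (Finset.prod_ne_zero_iff.2 fun i _ => ?_)
  have : (0 : ℝ) ≤ i := i.cast_nonneg
  linarith

/-- A continuous function on `[0, T]` orthogonal to all powers of `τ ↦ (1 + T - τ)⁻¹` vanishes. -/
lemma eq_zero_of_integral_mul_inv_pow_eq_zero {T : ℝ} (hT : 0 < T) {φ : ℝ → ℝ}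
    (hφ : ContinuousOn φ (Set.Icc 0 T))
    (h : ∀ n : ℕ, ∫ τ in (0 : ℝ)..T, φ τ * ((1 + T - τ)⁻¹) ^ n = 0) :
    ∀ τ ∈ Set.Icc 0 T, φ τ = 0 := by
  have hu : Set.uIcc 0 T = Set.Icc 0 T := Set.uIcc_of_le hT.le
  have hinv : ContinuousOn (fun τ : ℝ => (1 + T - τ)⁻¹) (Set.Icc 0 T) :=
    ContinuousOn.inv₀ (by fun_prop) fun τ hτ => by linarith [hτ.2]
  have hpoly : ∀ p : Polynomial ℝ, ∫ τ in (0 : ℝ)..T, φ τ * p.eval (1 + T - τ)⁻¹ = 0 := by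
    intro p
    simp only [Polynomial.eval_eq_sum_range, Finset.mul_sum]
    rw [intervalIntegral.integral_finsetSum]
    · refine Finset.sum_eq_zero fun n _ => ?_
      simp only [mul_left_comm (φ _)]
      rw [intervalIntegral.integral_const_mul, h, mul_zero]
    · intro n _
      refine ContinuousOn.intervalIntegrable ?_
      rw [hu]
      exact hφ.mul (continuousOn_const.mul (hinv.pow n))
  have hq : ContinuousOn (fun y : ℝ => φ (1 + T - y⁻¹)) (Set.Icc (1 + T)⁻¹ 1) := by
    have hpos : 0 < (1 + T)⁻¹ := by positivity
    refine hφ.comp (continuousOn_const.sub (continuousOn_id.inv₀ fun y hy => ?_)) fun y hy => ?_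
    · exact (hpos.trans_le hy.1).ne'
    · have h1 : y⁻¹ ≤ 1 + T := inv_le_of_inv_le₀ (by positivity) hy.1
      have h2 : 1 ≤ y⁻¹ := (one_le_inv₀ (hpos.trans_le hy.1)).2 hy.2
      exact ⟨by linarith, by linarith⟩
  have hφu : ContinuousOn φ (Set.uIcc 0 T) := hu ▸ hφ
  have hsq : ∫ τ in (0 : ℝ)..T, φ τ * φ τ ≤ 0 := by
    have hA : 0 ≤ ∫ τ in (0 : ℝ)..T, ‖φ τ‖ :=
      intervalIntegral.integral_nonneg hT.le fun _ _ => norm_nonneg _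
    refine le_of_forall_pos_le_add fun ε hε => ?_
    set A := ∫ τ in (0 : ℝ)..T, ‖φ τ‖
    obtain ⟨p, hp⟩ := exists_polynomial_near_of_continuousOn _ _ _ hq (ε / (A + 1)) (by positivity)
    have hpc : ContinuousOn (fun τ => φ τ * p.eval (1 + T - τ)⁻¹) (Set.uIcc 0 T) := by
      rw [hu]
      exact hφ.mul (p.continuous.comp_continuousOn hinv)
    have hdiff : ∫ τ in (0 : ℝ)..T, φ τ * φ τ =
        ∫ τ in (0 : ℝ)..T, (φ τ * φ τ - φ τ * p.eval (1 + T - τ)⁻¹) := by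
      rw [intervalIntegral.integral_sub (f := fun τ => φ τ * φ τ)
        (hφu.mul hφu).intervalIntegrable hpc.intervalIntegrable,
        hpoly, sub_zero]
    have hle : ∫ τ in (0 : ℝ)..T, φ τ * φ τ ≤ ∫ τ in (0 : ℝ)..T, ‖φ τ‖ * (ε / (A + 1)) := by
      rw [hdiff]
      refine (le_norm_self _).trans (intervalIntegral.norm_integral_le_of_norm_le hT.le
        (.of_forall fun τ hτ => ?_) (hφu.norm.intervalIntegrable.mul_const _))
      have hpos : 0 < 1 + T - τ := by linarith [hτ.2]
      have hy := hp (1 + T - τ)⁻¹ ⟨inv_anti₀ hpos (by linarith [hτ.1]),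
        inv_le_one_of_one_le₀ (by linarith [hτ.2])⟩
      rw [inv_inv, sub_sub_cancel, abs_sub_comm] at hy
      rw [← mul_sub, norm_mul]
      exact mul_le_mul_of_nonneg_left hy.le (norm_nonneg _)
    rw [intervalIntegral.integral_mul_const] at hle
    have hAε : A * (ε / (A + 1)) ≤ ε := by
      rw [mul_div_assoc', div_le_iff₀ (by positivity)]
      nlinarith
    linarith
  by_contra! hne
  obtain ⟨τ, hτ, hτ0⟩ := hne
  exact hsq.not_gt (intervalIntegral.integral_pos hT (hφ.mul hφ)
    (fun x _ => mul_self_nonneg _) ⟨τ, hτ, mul_self_pos.2 hτ0⟩)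

lemma eq_zero_of_integral_add_sub_rpow_mul_eq_zero {r T : ℝ} (hr : r < 0) (hT : 0 < T)
    {f : ℝ → ℝ} (hf : Continuous f)
    (h : ∀ t, 0 < t → ∫ τ in (0 : ℝ)..T, (t + T - τ) ^ r * f τ = 0) :
    ∀ τ ∈ Set.Icc 0 T, f τ = 0 := by
  have hpos : ∀ τ ∈ Set.Icc 0 T, 0 < 1 + T - τ := fun τ hτ => by linarith [hτ.2]
  have hφ : ContinuousOn (fun τ => (1 + T - τ) ^ r * f τ) (Set.Icc 0 T) :=
    (ContinuousOn.rpow_const (by fun_prop) fun τ hτ => Or.inl (hpos τ hτ).ne').mul hf.continuousOn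
  intro τ hτ
  refine (mul_eq_zero.1 (eq_zero_of_integral_mul_inv_pow_eq_zero hT hφ (fun n => ?_) τ hτ)
    ).resolve_left (rpow_pos_of_pos (hpos τ hτ) r).ne'
  refine Eq.trans ?_ (integral_add_sub_rpow_mul_eq_zero n hr hT hf h one_pos)
  refine intervalIntegral.integral_congr fun x hx => ?_
  rw [Set.uIcc_of_le hT.le] at hx
  simp only [rpow_sub (hpos x hx), rpow_natCast, inv_pow, div_eq_mul_inv]
  ring

/-- The Riemann–Liouville fractional derivative of a nonconstant
`T`-periodic, `m`-times continuously differentiable function is not `T`-periodic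
on `(0, ∞)`. -/
theorem riemannLiouville_not_periodic
    (T α : ℝ) (hT : 0 < T) (hα : 0 < α) (hαZ : ∀ n : ℤ, α ≠ (n : ℝ))
    (m : ℕ) (hm : m = ⌈α⌉₊)
    (f : ℝ → ℝ) (hper : ∀ t : ℝ, f (t + T) = f t)
    (hnc : ∃ t₁ t₂ : ℝ, f t₁ ≠ f t₂)
    (hsm : ContDiff ℝ m f)
    (g : ℝ → ℝ)
    (hg : ∀ t : ℝ, g t =
      iteratedDeriv m (fun s : ℝ =>
        (1 / Real.Gamma ((m : ℝ) - α)) *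
          ∫ τ in (0:ℝ)..s, (s - τ) ^ ((m : ℝ) - α - 1) * f τ) t) :
    ¬ (∀ t : ℝ, 0 < t → g (t + T) = g t) := by
  intro hgper
  have hαm : α < m := lt_of_le_of_ne (hm ▸ Nat.le_ceil α) fun h => hαZ m (by exact_mod_cast h)
  have hmα : (m : ℝ) < α + 1 := hm ▸ Nat.ceil_lt_add_one hα.le
  set r : ℝ := (m : ℝ) - α - 1 with hr
  have hr1 : -1 < r := by linarith
  have hr0 : r < 0 := by linarith
  have hf : Continuous f := hsm.continuous
  have hc : 1 / Real.Gamma ((m : ℝ) - α) ≠ 0 :=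
    one_div_ne_zero (Real.Gamma_pos_of_pos (by linarith)).ne'
  set I : ℝ → ℝ := fun s => ∫ τ in (0 : ℝ)..s, (s - τ) ^ r * f τ with hI
  have hgI : ∀ t, g t = 1 / Real.Gamma ((m : ℝ) - α) * iteratedDeriv m I t := fun t => by
    rw [hg, iteratedDeriv_const_mul_field]
  have hJ : ∀ t, 0 < t → ∫ τ in (0 : ℝ)..T, (t + T - τ) ^ (r - m) * f τ = 0 := by
    intro t ht
    have hd := iteratedDeriv_integral_add_sub_rpow_mul m (r := r) hT hf ht
    have hsub : (fun t => ∫ τ in (0 : ℝ)..T, (t + T - τ) ^ r * f τ) =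
        fun t => I (t + T) - I t := by
      funext t
      simp only [hI]
      rw [integral_sub_rpow_mul_add_period hr1 hf hper, add_sub_cancel_right]
    have hIt : ∀ s, 0 < s → ContDiffAt ℝ m I s := fun s hs =>
      contDiffAt_integral_sub_rpow_mul hr1 hs hsm
    have hIT : ContDiffAt ℝ m (fun t => I (t + T)) t :=
      (hIt (t + T) (by positivity)).comp t (contDiffAt_id.add contDiffAt_const)
    have hper_I : iteratedDeriv m I (t + T) = iteratedDeriv m I t := by
      have := hgper t ht
      rw [hgI, hgI] at this
      exact mul_left_cancel₀ hc this
    rw [hsub, iteratedDeriv_fun_sub hIT (hIt t ht), iteratedDeriv_comp_add_const] at hd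
    simp only [hper_I, sub_self] at hd
    refine (mul_eq_zero.1 hd.symm).resolve_left (Finset.prod_ne_zero_iff.2 fun i _ => ?_)
    have : (0 : ℝ) ≤ i := i.cast_nonneg
    linarith
  have hm0 : (0 : ℝ) ≤ m := m.cast_nonneg
  have hf0 := eq_zero_of_integral_add_sub_rpow_mul_eq_zero (by linarith : r - m < 0) hT hf hJ
  have hzero : ∀ t, f t = 0 := fun t => by
    obtain ⟨y, hy, hfy⟩ := Function.Periodic.exists_mem_Ico₀ hper hT t
    rw [hfy, hf0 y (Set.Ico_subset_Icc_self hy)]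
  obtain ⟨t₁, t₂, hne⟩ := hnc
  exact hne (by rw [hzero, hzero])
end

section
/- Let T > 0, let α > 0 be a non-integer real number, let m = ⌈α⌉, and let f : ℝ → ℝ be a nonconstant, T-periodic, m-times continuously differentiable function. Suppose g : ℝ → ℝ is such that for every t > 0 the sequence n ↦ (t/n)^{−α} · Σ_{k=0}^{n} (−1)^k (α^{(k)}/k!) f(t − k·t/n) converges to g(t) as n → ∞ (this is the Grünwald–Letnikov fractional derivative of f of order α with lower terminal 0). Then it is NOT the case that g(t+T) = g(t) for all t > 0. -/
open Real Filter Topology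

/-- The falling factorial `x⁽ʲ⁾ = ∏_{l=0}^{j-1} (x - l)`. -/
noncomputable def fallingFactorial (x : ℝ) (j : ℕ) : ℝ :=
  ∏ l ∈ Finset.range j, (x - (l : ℝ))

/-- Asymptotics of the signed generalized binomial coefficients. -/
theorem tendsto_neg_one_pow_mul_fallingFactorial_mul_rpow {α : ℝ} (hαZ : ∀ n : ℤ, α ≠ (n : ℝ)) :
    Tendsto (fun k : ℕ => (-1 : ℝ) ^ k * (fallingFactorial α k / (Nat.factorial k : ℝ)) *
      (k : ℝ) ^ (α + 1)) atTop (𝓝 (Gamma (-α))⁻¹) := by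
  have hne : ∀ k : ℕ, fallingFactorial α k ≠ 0 := fun k =>
    Finset.prod_ne_zero_iff.mpr fun l _ => sub_ne_zero.mpr (by exact_mod_cast hαZ l)
  have hΓ : Gamma (-α) ≠ 0 := Gamma_ne_zero fun l h => hαZ l (by push_cast; linarith)
  have hprod : ∀ n : ℕ, ∏ j ∈ Finset.range n, (-α + (j : ℝ)) =
      (-1) ^ n * fallingFactorial α n := fun n => by
    rw [fallingFactorial, ← Finset.card_range n, ← Finset.prod_const, Finset.card_range,
      ← Finset.prod_mul_distrib]
    exact Finset.prod_congr rfl fun _ _ => by ring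
  have hinv := (GammaSeq_tendsto_Gamma (-α)).inv₀ hΓ
  have hratio : Tendsto (fun n : ℕ => (1 + 1 / (n : ℝ)) ^ α) atTop (𝓝 1) := by
    have h := (tendsto_const_nhds (x := (1 : ℝ))).add tendsto_one_div_atTop_nhds_zero_nat
    simpa using h.rpow_const (p := α) (by simp)
  rw [← tendsto_add_atTop_iff_nat 1]
  have hmul := hinv.mul hratio
  rw [mul_one] at hmul
  refine hmul.congr' ?_
  filter_upwards [eventually_gt_atTop 0] with n hn
  have hn' : (0 : ℝ) < n := by exact_mod_cast hn
  rw [GammaSeq, hprod, Nat.factorial_succ, show 1 + 1 / (n : ℝ) = (n + 1) / n by field_simp,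
    div_rpow (by positivity) hn'.le, rpow_neg hn'.le]
  push_cast
  rw [rpow_add (by positivity), rpow_one]
  have := rpow_pos_of_pos hn' α
  have : (Nat.factorial n : ℝ) ≠ 0 := by positivity
  have := hne (n + 1)
  field_simp

/-- Right Riemann sums of a continuous function on `[0, 1]` converge to its integral. -/
theorem tendsto_sum_div_integral {H : ℝ → ℝ} (hH : ContinuousOn H (Set.Icc 0 1)) :
    Tendsto (fun j : ℕ => (∑ i ∈ Finset.range j, H (((i : ℝ) + 1) / j)) / j) atTop
      (𝓝 (∫ s in (0 : ℝ)..1, H s)) := by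
  have huc := isCompact_Icc.uniformContinuousOn_of_continuous hH
  rw [Metric.tendsto_atTop]
  intro ε hε
  obtain ⟨δ, hδ, hδH⟩ := Metric.uniformContinuousOn_iff.mp huc (ε / 2) (by positivity)
  obtain ⟨N, hN⟩ := exists_nat_gt (1 / δ)
  refine ⟨N + 1, fun j hj => ?_⟩
  have hj0 : (0 : ℝ) < j := by exact_mod_cast (show 0 < j by omega)
  have hjδ : 1 / (j : ℝ) < δ := by
    have h1 : (N : ℝ) < j := by exact_mod_cast (show N < j by omega)
    rw [div_lt_iff₀ hδ] at hN
    rw [div_lt_iff₀ hj0]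
    nlinarith
  set a : ℕ → ℝ := fun i => (i : ℝ) / j with ha
  have hmono : ∀ i, a i ≤ a (i + 1) := fun i => by simp only [ha]; push_cast; gcongr; linarith
  have hlen : ∀ i, a (i + 1) - a i = 1 / j := fun i => by simp only [ha]; push_cast; ring
  have hsub : ∀ i < j, Set.Icc (a i) (a (i + 1)) ⊆ Set.Icc 0 1 := fun i hi => by
    refine Set.Icc_subset_Icc (by positivity) ?_
    simp only [ha]
    rw [div_le_one hj0]
    exact_mod_cast hi
  have hint : ∀ i < j, IntervalIntegrable H MeasureTheory.volume (a i) (a (i + 1)) := fun i hi =>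
    ContinuousOn.intervalIntegrable (by
      rw [Set.uIcc_of_le (hmono i)]
      exact hH.mono (hsub i hi))
  have hsum := intervalIntegral.sum_integral_adjacent_intervals hint
  have ha0 : a 0 = 0 := by simp [ha]
  have haj : a j = 1 := by simp [ha, hj0.ne']
  rw [ha0, haj] at hsum
  rw [dist_eq_norm, ← hsum, Finset.sum_div, ← Finset.sum_sub_distrib]
  have hterm : ∀ i ∈ Finset.range j,
      ‖H (((i : ℝ) + 1) / j) / j - ∫ s in a i..a (i + 1), H s‖ ≤ ε / 2 * (1 / j) := by
    intro i hi
    have hi' := Finset.mem_range.mp hi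
    have hai : ((i : ℝ) + 1) / j = a (i + 1) := by simp [ha]
    have hconst : H (((i : ℝ) + 1) / j) / j =
        ∫ _ in a i..a (i + 1), H (a (i + 1)) := by
      rw [intervalIntegral.integral_const, hlen, hai, smul_eq_mul]; ring
    rw [hconst, ← intervalIntegral.integral_sub (by simp) (hint i hi')]
    have := intervalIntegral.norm_integral_le_of_norm_le_const (a := a i) (b := a (i + 1))
      (f := fun s => H (a (i + 1)) - H s) (C := ε / 2) fun s hs => by
        rw [Set.uIoc_of_le (hmono i)] at hs
        rw [← dist_eq_norm]
        refine (hδH _ (hsub i hi' ⟨hmono i, le_rfl⟩) _ (hsub i hi' ⟨hs.1.le, hs.2⟩) ?_).le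
        rw [dist_eq_norm, norm_of_nonneg (by linarith [hs.2])]
        linarith [hlen i, hs.1]
    rwa [hlen, abs_of_pos (by positivity)] at this
  refine (norm_sum_le_of_le _ hterm).trans_lt ?_
  rw [Finset.sum_const, Finset.card_range, nsmul_eq_mul]
  field_simp
  linarith

theorem choose_neg_ne_zero {β : ℝ} (hβ : 0 < β) (n : ℕ) : Ring.choose (-β) n ≠ 0 := by
  have hfac := Ring.factorial_nsmul_multichoose_eq_ascPochhammer β n
  rw [Polynomial.ascPochhammer_smeval_eq_eval] at hfac
  have hpos := ascPochhammer_pos n β hβ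
  rw [← hfac] at hpos
  have hmul : Ring.multichoose β n ≠ 0 := fun h => by simp [h] at hpos
  rw [Ring.choose_neg, ← Ring.multichoose_eq]
  exact (smul_ne_zero_iff_ne _).mpr hmul

/-- A continuous function whose integrals against `(p + s) ^ (-β)`, `p = 1, 2, …`, vanish has
vanishing moments on `[0, 1]`. -/
theorem integral_pow_mul_eq_zero {β : ℝ} (hβ : 0 < β) {G : ℝ → ℝ} (hG : Continuous G)
    (h : ∀ p : ℕ, 0 < p → ∫ s in (0 : ℝ)..1, ((p : ℝ) + s) ^ (-β) * G s = 0) (n : ℕ) :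
    ∫ s in (0 : ℝ)..1, s ^ n * G s = 0 := by
  set φ : ℝ → ℝ := fun x => ∫ s in (0 : ℝ)..1, (1 + x * s) ^ (-β) * G s with hφ
  set P : FormalMultilinearSeries ℝ ℝ ℝ := .ofScalars ℝ
    fun n => Ring.choose (-β) n * ∫ s in (0 : ℝ)..1, s ^ n * G s with hP
  obtain ⟨C, hC⟩ := (isCompact_Icc (a := (0 : ℝ)) (b := 1)).exists_bound_of_continuousOn
    hG.continuousOn
  have hser : HasFPowerSeriesAt φ P 0 := by
    rw [hasFPowerSeriesAt_iff]
    filter_upwards [Metric.ball_mem_nhds (0 : ℝ) one_pos] with x hx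
    rw [mem_ball_zero_iff] at hx
    have hbin : ∀ y : ℝ, ‖y‖ < 1 →
        HasSum (fun n => Ring.choose (-β) n * y ^ n) ((1 + y) ^ (-β)) := fun y hy => by
      have := (one_add_rpow_hasFPowerSeriesOnBall_zero (a := -β)).hasSum (y := y)
        (by simpa [← ofReal_norm] using hy)
      simpa [binomialSeries, FormalMultilinearSeries.coeff_ofScalars, mul_comm (y ^ _)] using this
    have hsummable : Summable fun n => ‖Ring.choose (-β) n * x ^ n‖ :=
      (hbin x hx).summable.norm
    have key := intervalIntegral.hasSum_integral_of_dominated_convergence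
      (μ := MeasureTheory.volume) (a := 0) (b := 1)
      (F := fun n s => Ring.choose (-β) n * (x * s) ^ n * G s)
      (f := fun s => (1 + x * s) ^ (-β) * G s)
      (fun n _ => ‖Ring.choose (-β) n * x ^ n‖ * C)
      (fun n => (by fun_prop : Continuous fun s : ℝ =>
        Ring.choose (-β) n * (x * s) ^ n * G s).aestronglyMeasurable)
      (fun n => .of_forall fun s hs => by
        rw [Set.uIoc_of_le zero_le_one] at hs
        rw [norm_mul, mul_pow, ← mul_assoc, norm_mul _ (s ^ n)]
        have h1 : ‖s ^ n‖ ≤ 1 := by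
          rw [norm_pow, norm_of_nonneg hs.1.le]
          exact pow_le_one₀ hs.1.le hs.2
        exact mul_le_mul (mul_le_of_le_one_right (norm_nonneg _) h1) (hC s ⟨hs.1.le, hs.2⟩)
          (norm_nonneg _) (norm_nonneg _))
      (.of_forall fun _ _ => hsummable.mul_right C)
      (by simp)
      (.of_forall fun s hs => by
        rw [Set.uIoc_of_le zero_le_one] at hs
        refine (hbin (x * s) ?_).mul_right (G s)
        rw [norm_mul, norm_of_nonneg hs.1.le]
        nlinarith [norm_nonneg x, hs.1, hs.2])
    convert key using 2 with n
    · rw [hP, FormalMultilinearSeries.coeff_ofScalars, smul_eq_mul, ← mul_assoc,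
        ← intervalIntegral.integral_const_mul]
      congr 1 with s
      ring
    · simp
  have hfreq : ∃ᶠ x in 𝓝[≠] (0 : ℝ), φ x = 0 := by
    have ht : Tendsto (fun p : ℕ => 1 / ((p : ℝ) + 1)) atTop (𝓝[≠] 0) :=
      tendsto_nhdsWithin_iff.mpr ⟨tendsto_one_div_add_atTop_nhds_zero_nat,
        .of_forall fun p => by simp only [Set.mem_compl_iff, Set.mem_singleton_iff]; positivity⟩
    refine ht.frequently (Frequently.of_forall fun p => ?_)
    have hp := h (p + 1) p.succ_pos
    push_cast at hp
    have hp0 : (0 : ℝ) < (p : ℝ) + 1 := by positivity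
    have heq : ∫ s in (0 : ℝ)..1, ((p : ℝ) + 1 + s) ^ (-β) * G s =
        ((p : ℝ) + 1) ^ (-β) * φ (1 / ((p : ℝ) + 1)) := by
      rw [hφ, ← intervalIntegral.integral_const_mul]
      refine intervalIntegral.integral_congr fun s hs => ?_
      rw [Set.uIcc_of_le zero_le_one] at hs
      have h0 : 0 ≤ 1 + 1 / ((p : ℝ) + 1) * s := by have := hs.1; positivity
      rw [← mul_assoc, ← mul_rpow hp0.le h0]
      congr 2
      field_simp
    rw [heq] at hp
    exact (mul_eq_zero.mp hp).resolve_left (rpow_pos_of_pos hp0 _).ne'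
  have hP0 : P = 0 := hser.eq_zero_of_eventually
    (hser.analyticAt.frequently_zero_iff_eventually_zero.mp hfreq)
  have hcoeff : P.coeff n = 0 := by rw [hP0]; simp [FormalMultilinearSeries.coeff]
  rw [hP, FormalMultilinearSeries.coeff_ofScalars] at hcoeff
  exact (mul_eq_zero.mp hcoeff).resolve_left (choose_neg_ne_zero hβ n)

/-- A continuous function on `[0, 1]` with vanishing moments is zero. -/
theorem eq_zero_of_integral_pow_mul_eq_zero {G : ℝ → ℝ} (hG : Continuous G)
    (h : ∀ n : ℕ, ∫ s in (0 : ℝ)..1, s ^ n * G s = 0) {s : ℝ} (hs : s ∈ Set.Icc (0 : ℝ) 1) :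
    G s = 0 := by
  have hpoly : ∀ P : Polynomial ℝ, ∫ s in (0 : ℝ)..1, P.eval s * G s = 0 := by
    intro P
    simp_rw [Polynomial.eval_eq_sum_range, Finset.sum_mul]
    rw [intervalIntegral.integral_finsetSum
      fun i _ => (by fun_prop : Continuous _).intervalIntegrable _ _]
    simp_rw [mul_assoc, intervalIntegral.integral_const_mul, h, mul_zero, Finset.sum_const_zero]
  obtain ⟨C, hC⟩ := (isCompact_Icc (a := (0 : ℝ)) (b := 1)).exists_bound_of_continuousOn
    hG.continuousOn
  have hC0 : 0 ≤ C := (norm_nonneg _).trans (hC s hs)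
  have hsq : ∫ s in (0 : ℝ)..1, G s ^ 2 = 0 := by
    rw [← norm_le_zero_iff]
    refine le_of_forall_pos_le_add fun ε hε => ?_
    obtain ⟨P, hPε⟩ := exists_polynomial_near_of_continuousOn 0 1 G hG.continuousOn
      (ε / (C + 1)) (by positivity)
    have hsplit : ∫ s in (0 : ℝ)..1, G s ^ 2 = ∫ s in (0 : ℝ)..1, (G s - P.eval s) * G s := by
      have hsub := intervalIntegral.integral_sub (μ := MeasureTheory.volume) (a := 0) (b := 1)
        ((hG.pow 2).intervalIntegrable _ _) ((P.continuous.mul hG).intervalIntegrable _ _)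
      simp only [Pi.pow_apply, Pi.mul_apply, hpoly P, sub_zero] at hsub
      rw [← hsub]
      congr 1 with s
      ring
    rw [hsplit]
    refine (intervalIntegral.norm_integral_le_of_norm_le_const (C := ε / (C + 1) * C)
      fun s hs => ?_).trans ?_
    · rw [Set.uIoc_of_le zero_le_one] at hs
      have hs' : s ∈ Set.Icc (0 : ℝ) 1 := ⟨hs.1.le, hs.2⟩
      rw [norm_mul, norm_sub_rev]
      exact mul_le_mul (hPε s hs').le (hC s hs') (norm_nonneg _) (by positivity)
    · rw [sub_zero, abs_one, mul_one, zero_add, div_mul_eq_mul_div, div_le_iff₀ (by positivity)]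
      nlinarith
  by_contra hne
  exact (intervalIntegral.integral_pos zero_lt_one (hG.pow 2).continuousOn
    (fun _ _ => sq_nonneg _) ⟨s, hs, sq_pos_of_ne_zero hne⟩).ne' hsq

/-- A weighted Riemann sum whose weights `c k` behave like `L * k ^ (-α - 1)` along the block
`p * j < k ≤ (p + 1) * j`. -/
theorem tendsto_rpow_mul_sum_block {c : ℕ → ℝ} {α L : ℝ}
    (hc : Tendsto (fun k : ℕ => c k * (k : ℝ) ^ (α + 1)) atTop (𝓝 L))
    {G : ℝ → ℝ} (hG : Continuous G) {p : ℕ} (hp : 0 < p) :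
    Tendsto (fun j : ℕ => (j : ℝ) ^ α * ∑ i ∈ Finset.range j,
        c (p * j + 1 + i) * G (((i : ℝ) + 1) / j)) atTop
      (𝓝 (L * ∫ s in (0 : ℝ)..1, ((p : ℝ) + s) ^ (-(α + 1)) * G s)) := by
  have hp0 : (0 : ℝ) < p := by exact_mod_cast hp
  set H : ℝ → ℝ := fun s => ((p : ℝ) + s) ^ (-(α + 1)) * G s with hHdef
  have hH : ContinuousOn H (Set.Icc 0 1) := by
    refine ContinuousOn.mul (ContinuousOn.rpow_const (by fun_prop) fun s hs => Or.inl ?_)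
      hG.continuousOn
    have := hs.1
    positivity
  obtain ⟨C, hC⟩ := isCompact_Icc.exists_bound_of_continuousOn hH
  have hC0 : 0 ≤ C := (norm_nonneg _).trans (hC 0 (by simp))
  have hmain := (tendsto_sum_div_integral hH).const_mul L
  have hdiff : Tendsto (fun j : ℕ => (j : ℝ) ^ α * (∑ i ∈ Finset.range j,
        c (p * j + 1 + i) * G (((i : ℝ) + 1) / j)) -
      L * ((∑ i ∈ Finset.range j, H (((i : ℝ) + 1) / j)) / j)) atTop (𝓝 0) := by
    rw [Metric.tendsto_atTop]
    intro ε hε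
    obtain ⟨N, hN⟩ := Metric.tendsto_atTop.mp hc (ε / (C + 1)) (by positivity)
    refine ⟨N + 1, fun j hj => ?_⟩
    have hj0 : (0 : ℝ) < j := by exact_mod_cast (show 0 < j by omega)
    have hterm : ∀ i ∈ Finset.range j,
        ‖(j : ℝ) ^ α * (c (p * j + 1 + i) * G (((i : ℝ) + 1) / j)) -
          L * (H (((i : ℝ) + 1) / j) / j)‖ ≤ ε / (C + 1) * (C / j) := by
      intro i hi
      have hi' := Finset.mem_range.mp hi
      set k := p * j + 1 + i with hk
      have hkN : N ≤ k := by nlinarith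
      have hk0 : (0 : ℝ) < k := by positivity
      have hs : ((i : ℝ) + 1) / j ∈ Set.Icc (0 : ℝ) 1 :=
        ⟨by positivity, by rw [div_le_one hj0]; exact_mod_cast hi'⟩
      have hpk : (p : ℝ) + ((i : ℝ) + 1) / j = k / j := by
        rw [hk]; push_cast; field_simp; ring
      have heq : (j : ℝ) ^ α * (c k * G (((i : ℝ) + 1) / j)) - L * (H (((i : ℝ) + 1) / j) / j) =
          (c k * (k : ℝ) ^ (α + 1) - L) * (H (((i : ℝ) + 1) / j) / j) := by
        simp only [hHdef, hpk]
        rw [rpow_neg (by positivity), div_rpow hk0.le hj0.le, rpow_add hj0, rpow_one]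
        have := rpow_pos_of_pos hk0 (α + 1)
        have := rpow_pos_of_pos hj0 α
        field_simp
      rw [heq, norm_mul, norm_div, norm_of_nonneg hj0.le, ← dist_eq_norm]
      gcongr
      · exact (hN k hkN).le
      · exact hC _ hs
    rw [dist_zero_right, Finset.mul_sum, Finset.sum_div, Finset.mul_sum,
      ← Finset.sum_sub_distrib]
    refine (norm_sum_le_of_le _ hterm).trans_lt ?_
    rw [Finset.sum_const, Finset.card_range, nsmul_eq_mul]
    have : (j : ℝ) * (ε / (C + 1) * (C / j)) = ε * (C / (C + 1)) := by field_simp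
    rw [this]
    refine mul_lt_of_lt_one_right hε ?_
    rw [div_lt_one (by positivity)]
    linarith
  simpa using hdiff.add hmain

/-- The Grünwald–Letnikov fractional derivative of a nonconstant
`T`-periodic, `m`-times continuously differentiable function is not `T`-periodic
on `(0, ∞)`. -/
theorem gruenwaldLetnikov_not_periodic
    (T α : ℝ) (hT : 0 < T) (hα : 0 < α) (hαZ : ∀ n : ℤ, α ≠ (n : ℝ))
    (m : ℕ) (hm : m = ⌈α⌉₊)
    (f : ℝ → ℝ) (hper : ∀ t : ℝ, f (t + T) = f t)
    (hnc : ∃ t₁ t₂ : ℝ, f t₁ ≠ f t₂)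
    (hsm : ContDiff ℝ m f)
    (g : ℝ → ℝ)
    (hg : ∀ t : ℝ, 0 < t →
      Tendsto (fun n : ℕ =>
          (t / n) ^ (-α) *
            ∑ k ∈ Finset.range (n + 1),
              (-1 : ℝ) ^ k * (fallingFactorial α k / (Nat.factorial k : ℝ)) *
                f (t - k * (t / n)))
        atTop (𝓝 (g t))) :
    ¬ (∀ t : ℝ, 0 < t → g (t + T) = g t) := by
  intro hgper
  have hperiod : Function.Periodic f T := hper
  set c : ℕ → ℝ := fun k => (-1 : ℝ) ^ k * (fallingFactorial α k / (Nat.factorial k : ℝ)) with hc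
  set G : ℝ → ℝ := fun s => f (-(s * T)) with hGdef
  have hG : Continuous G := hsm.continuous.comp (by fun_prop)
  have hcoef := tendsto_neg_one_pow_mul_fallingFactorial_mul_rpow hαZ
  have hΓ : Gamma (-α) ≠ 0 := Gamma_ne_zero fun l h => hαZ l (by push_cast; linarith)
  -- Sampling at `t = q * T` with step `T / j`.
  have hsample : ∀ q : ℕ, 0 < q → Tendsto (fun j : ℕ => (T / j) ^ (-α) *
      ∑ k ∈ Finset.range (q * j + 1), c k * G (k / j)) atTop (𝓝 (g (q * T))) := by
    intro q hq
    have hq0 : (0 : ℝ) < q := by exact_mod_cast hq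
    refine ((hg (q * T) (by positivity)).comp
      (tendsto_id.const_mul_atTop' hq : Tendsto (fun j : ℕ => q * j) atTop atTop)).congr fun j => ?_
    have hstep : (q : ℝ) * T / ((q * j : ℕ) : ℝ) = T / j := by
      push_cast
      exact mul_div_mul_left _ _ hq0.ne'
    simp only [Function.comp_apply, hstep]
    congr 1
    refine Finset.sum_congr rfl fun k _ => ?_
    simp only [hc, hGdef]
    congr 1
    rw [← hperiod.sub_nat_mul_eq q]
    congr 1
    ring
  have hvanish : ∀ p : ℕ, 0 < p →
      ∫ s in (0 : ℝ)..1, ((p : ℝ) + s) ^ (-(α + 1)) * G s = 0 := by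
    intro p hp
    have hp0 : (0 : ℝ) < p := by exact_mod_cast hp
    have hdiff := (hsample (p + 1) p.succ_pos).sub (hsample p hp)
    rw [show ((p + 1 : ℕ) : ℝ) * T = p * T + T by push_cast; ring, hgper _ (by positivity),
      sub_self] at hdiff
    have hlim := (tendsto_rpow_mul_sum_block hcoef hG hp).const_mul (T ^ (-α))
    have huniq := tendsto_nhds_unique (hlim.congr' ?_) hdiff
    · have := (rpow_pos_of_pos hT (-α)).ne'
      simpa [this, hΓ] using huniq
    · filter_upwards [eventually_gt_atTop 0] with j hj
      have hj0 : (0 : ℝ) < j := by exact_mod_cast hj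
      rw [← mul_sub, show (p + 1) * j + 1 = (p * j + 1) + j by ring, Finset.sum_range_add,
        add_sub_cancel_left, div_rpow hT.le hj0.le, rpow_neg hj0.le, div_inv_eq_mul, mul_assoc]
      congr 2
      refine Finset.sum_congr rfl fun i _ => ?_
      simp only [hc, hGdef]
      congr 1
      rw [← hperiod.sub_nat_mul_eq p]
      congr 1
      push_cast
      field_simp
      ring
  have hG0 : ∀ s ∈ Set.Icc (0 : ℝ) 1, G s = 0 := fun s hs =>
    eq_zero_of_integral_pow_mul_eq_zero hG
      (integral_pow_mul_eq_zero (by positivity) hG hvanish) hs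
  have hf0 : ∀ t, f t = 0 := by
    intro t
    obtain ⟨y, hy, hty⟩ := hperiod.exists_mem_Ico₀ hT t
    rw [hty, ← hperiod.sub_eq y]
    have := hG0 (1 - y / T) ⟨by rw [sub_nonneg, div_le_one hT]; exact hy.2.le, by
      have : 0 ≤ y / T := div_nonneg hy.1 hT.le
      linarith⟩
    rw [← this]
    simp only [hGdef]
    congr 1
    field_simp
    ring
  obtain ⟨t₁, t₂, hne⟩ := hnc
  exact hne (by rw [hf0, hf0])
end

section
/- Let α > 0 be a non-integer real number, let m = ⌈α⌉, let L > 0, let T > 0, and let f : ℝ → ℝ be a T-periodic, m-times continuously differentiable function. Then the Caputo fractional derivative with sliding fixed memory length L, namely the function t ↦ (1/Γ(m−α)) ∫_{t−L}^{t} (t−τ)^{m−α−1} f^{(m)}(τ) dτ, is T-periodic on ℝ. -/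
open Real MeasureTheory intervalIntegral

/-- The Caputo fractional derivative with sliding fixed memory length `L`
of a `T`-periodic, `m`-times continuously differentiable function is `T`-periodic on `ℝ`. -/
theorem caputo_sliding_memory_periodic
    (α : ℝ) (hα : 0 < α) (hαZ : ∀ n : ℤ, α ≠ (n : ℝ))
    (m : ℕ) (hm : m = ⌈α⌉₊)
    (L T : ℝ) (hL : 0 < L) (hT : 0 < T)
    (f : ℝ → ℝ) (hper : ∀ t : ℝ, f (t + T) = f t)
    (hsm : ContDiff ℝ m f) :
    ∀ t : ℝ,
      (1 / Real.Gamma ((m : ℝ) - α)) *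
          ∫ τ in (t + T - L)..(t + T), (t + T - τ) ^ ((m : ℝ) - α - 1) * iteratedDeriv m f τ
        = (1 / Real.Gamma ((m : ℝ) - α)) *
            ∫ τ in (t - L)..t, (t - τ) ^ ((m : ℝ) - α - 1) * iteratedDeriv m f τ := by
  intro t
  have hderiv : ∀ τ, iteratedDeriv m f (τ + T) = iteratedDeriv m f τ := fun τ => by
    rw [← congrFun (iteratedDeriv_comp_add_const m f T) τ, funext hper]
  rw [show t + T - L = t - L + T by ring, ← intervalIntegral.integral_comp_add_right]
  simp only [hderiv, add_sub_add_right_eq_sub]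
end

section
/- Let γ be the Euler–Mascheroni constant and let L > exp(1 − γ). Then the function μ(α) = L^{1−α}/Γ(2−α) is strictly decreasing on the interval [0,1]; that is, for all 0 ≤ α₁ < α₂ ≤ 1, L^{1−α₂}/Γ(2−α₂) < L^{1−α₁}/Γ(2−α₁). -/
open Real

/-- The tangent of `log Γ` at `2` has slope `1 - γ`. -/
lemma hasDerivAt_log_Gamma_two :
    HasDerivAt (Real.log ∘ Real.Gamma) (1 - Real.eulerMascheroniConstant) 2 := by
  have h : HasDerivAt Real.Gamma (1 - Real.eulerMascheroniConstant) 2 := by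
    have h₁ := Real.hasDerivAt_Gamma_nat 1
    rw [Nat.cast_one, one_add_one_eq_two] at h₁
    refine h₁.congr_deriv ?_
    simp [harmonic]
    ring
  simpa [Function.comp_def] using h.log (by simp)

/-- By convexity, `log Γ` grows at rate at most `1 - γ` on `(0, 2]`. -/
lemma log_Gamma_sub_le {x y : ℝ} (hx : 0 < x) (hxy : x < y) (hy : y ≤ 2) :
    Real.log (Real.Gamma y) - Real.log (Real.Gamma x) ≤
      (1 - Real.eulerMascheroniConstant) * (y - x) := by
  have hc := Real.convexOn_log_Gamma
  have h2 : slope (Real.log ∘ Real.Gamma) x 2 ≤ 1 - Real.eulerMascheroniConstant :=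
    hc.slope_le_of_hasDerivAt (Set.mem_Ioi.2 hx) (Set.mem_Ioi.2 two_pos)
      (hxy.trans_le hy) hasDerivAt_log_Gamma_two
  have h1 := hc.secant_mono (Set.mem_Ioi.2 hx) (Set.mem_Ioi.2 (hx.trans hxy))
    (Set.mem_Ioi.2 two_pos) hxy.ne' (hxy.trans_le hy).ne' hy
  rw [slope_def_field] at h2
  exact (div_le_iff₀ (sub_pos.2 hxy)).1 (h1.trans h2)

/-- If `L > exp(1 - γ)` where `γ` is the Euler–Mascheroni constant,
then `μ(α) = L^(1-α)/Γ(2-α)` is strictly decreasing on `[0, 1]`. -/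
theorem mu_strictAnti
    (L : ℝ) (hL : Real.exp (1 - Real.eulerMascheroniConstant) < L) :
    ∀ α₁ α₂ : ℝ, 0 ≤ α₁ → α₁ < α₂ → α₂ ≤ 1 →
      L ^ (1 - α₂) / Real.Gamma (2 - α₂) < L ^ (1 - α₁) / Real.Gamma (2 - α₁) := by
  intro α₁ α₂ h₁ h₁₂ h₂
  have hL0 : 0 < L := (Real.exp_pos _).trans hL
  have hlog : 1 - Real.eulerMascheroniConstant < Real.log L := (Real.lt_log_iff_exp_lt hL0).2 hL
  have hG₁ : 0 < Real.Gamma (2 - α₁) := Real.Gamma_pos_of_pos (by linarith)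
  have hG₂ : 0 < Real.Gamma (2 - α₂) := Real.Gamma_pos_of_pos (by linarith)
  have hP₁ : 0 < L ^ (1 - α₁) := Real.rpow_pos_of_pos hL0 _
  have hP₂ : 0 < L ^ (1 - α₂) := Real.rpow_pos_of_pos hL0 _
  have hΓ := log_Gamma_sub_le (x := 2 - α₂) (y := 2 - α₁) (by linarith) (by linarith) (by linarith)
  rw [← Real.log_lt_log_iff (div_pos hP₂ hG₂) (div_pos hP₁ hG₁),
    Real.log_div hP₂.ne' hG₂.ne', Real.log_div hP₁.ne' hG₁.ne',
    Real.log_rpow hL0, Real.log_rpow hL0]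
  nlinarith [mul_lt_mul_of_pos_right hlog (sub_pos.2 h₁₂)]
end

section
/- Let ψ denote the digamma function, ψ(x) = d/dx [ln Γ(x)], and let γ be the Euler–Mascheroni constant. Then for every α ∈ (0,1): 1 − α < exp(ψ(2−α)) and ψ(2−α) < 1 − γ; in particular exp(ψ(2−α)) < exp(1−γ). -/
open Real

theorem differentiableAt_log_Gamma {x : ℝ} (hx : 0 < x) :
    DifferentiableAt ℝ (fun s : ℝ => Real.log (Real.Gamma s)) x :=
  (Real.differentiableAt_Gamma fun m => by
    have : (0 : ℝ) ≤ m := m.cast_nonneg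
    linarith).log (Real.Gamma_pos_of_pos hx).ne'

theorem deriv_log_Gamma_add_one {x : ℝ} (hx : 0 < x) :
    deriv (fun s : ℝ => Real.log (Real.Gamma s)) (x + 1) =
      deriv (fun s : ℝ => Real.log (Real.Gamma s)) x + x⁻¹ := by
  rw [← deriv_comp_add_const (fun s : ℝ => Real.log (Real.Gamma s)), ← Real.deriv_log x,
    ← deriv_fun_add (differentiableAt_log_Gamma hx) (Real.differentiableAt_log hx.ne')]
  apply Filter.EventuallyEq.deriv_eq
  filter_upwards [lt_mem_nhds hx] with s hs
  rw [Real.Gamma_add_one hs.ne', Real.log_mul hs.ne' (Real.Gamma_pos_of_pos hs).ne', add_comm]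

theorem monotoneOn_deriv_log_Gamma :
    MonotoneOn (deriv (fun s : ℝ => Real.log (Real.Gamma s))) (Set.Ioi 0) :=
  Real.convexOn_log_Gamma.monotoneOn_deriv fun _ hx => differentiableAt_log_Gamma hx

theorem strictMonoOn_deriv_log_Gamma :
    StrictMonoOn (deriv (fun s : ℝ => Real.log (Real.Gamma s))) (Set.Ioi 0) := by
  intro x hx y hy hxy
  rw [Set.mem_Ioi] at hx hy
  have hmono := monotoneOn_deriv_log_Gamma (Set.mem_Ioi.2 (add_pos hx one_pos))
    (Set.mem_Ioi.2 (add_pos hy one_pos)) (by linarith)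
  rw [deriv_log_Gamma_add_one hx, deriv_log_Gamma_add_one hy] at hmono
  have hinv : y⁻¹ < x⁻¹ := inv_strictAnti₀ hx hxy
  linarith

theorem log_le_deriv_log_Gamma_add_one {x : ℝ} (hx : 0 < x) :
    Real.log x ≤ deriv (fun s : ℝ => Real.log (Real.Gamma s)) (x + 1) := by
  have hslope := Real.convexOn_log_Gamma.slope_le_deriv (Set.mem_Ioi.2 hx)
    (Set.mem_Ioi.2 (add_pos hx one_pos)) (lt_add_one x)
    (differentiableAt_log_Gamma (add_pos hx one_pos))
  rw [slope_def_field, Function.comp_apply, Function.comp_apply, Real.Gamma_add_one hx.ne',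
    Real.log_mul hx.ne' (Real.Gamma_pos_of_pos hx).ne', add_sub_cancel_right,
    add_sub_cancel_left, div_one] at hslope
  exact hslope

theorem log_lt_deriv_log_Gamma_add_one {x : ℝ} (hx : 0 < x) :
    Real.log x < deriv (fun s : ℝ => Real.log (Real.Gamma s)) (x + 1) := by
  have hx1 : 0 < x + 1 := add_pos hx one_pos
  have hle := log_le_deriv_log_Gamma_add_one hx1
  rw [deriv_log_Gamma_add_one hx1] at hle
  have hne : x / (x + 1) ≠ 1 := ((div_lt_one hx1).2 (lt_add_one x)).ne
  have hlog := Real.log_lt_sub_one_of_pos (div_pos hx hx1) hne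
  rw [Real.log_div hx.ne' hx1.ne'] at hlog
  have hdiv : x / (x + 1) - 1 = -(x + 1)⁻¹ := by field_simp; ring
  linarith

theorem deriv_log_Gamma_two :
    deriv (fun s : ℝ => Real.log (Real.Gamma s)) 2 = 1 - Real.eulerMascheroniConstant := by
  have hone : deriv (fun s : ℝ => Real.log (Real.Gamma s)) 1 = -Real.eulerMascheroniConstant := by
    have h := Real.hasDerivAt_Gamma_one.log (by simp)
    simpa using h.deriv
  rw [← one_add_one_eq_two, deriv_log_Gamma_add_one one_pos, hone, inv_one]
  ring

/-- For the digamma function `ψ(x) = d/dx ln Γ(x)` and the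
Euler–Mascheroni constant `γ`: for every `α ∈ (0,1)` one has
`1 - α < exp(ψ(2-α))`, `ψ(2-α) < 1 - γ`, and hence `exp(ψ(2-α)) < exp(1-γ)`. -/
theorem digamma_bounds
    (ψ : ℝ → ℝ) (hψ : ∀ x : ℝ, ψ x = deriv (fun s : ℝ => Real.log (Real.Gamma s)) x) :
    ∀ α : ℝ, α ∈ Set.Ioo (0 : ℝ) 1 →
      1 - α < Real.exp (ψ (2 - α)) ∧
      ψ (2 - α) < 1 - Real.eulerMascheroniConstant ∧
      Real.exp (ψ (2 - α)) < Real.exp (1 - Real.eulerMascheroniConstant) := by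
  rintro α ⟨hα0, hα1⟩
  have hupper : ψ (2 - α) < 1 - Real.eulerMascheroniConstant := by
    rw [hψ, ← deriv_log_Gamma_two]
    exact strictMonoOn_deriv_log_Gamma (Set.mem_Ioi.2 (by linarith))
      (Set.mem_Ioi.2 two_pos) (by linarith)
  refine ⟨?_, hupper, Real.exp_lt_exp.2 hupper⟩
  rw [← Real.log_lt_iff_lt_exp (by linarith), hψ, show 2 - α = 1 - α + 1 by ring]
  exact log_lt_deriv_log_Gamma_add_one (by linarith)
end

section
/- Let α ∈ (0,1) and L > 0. Then for every t ∈ ℝ, the Caputo fractional derivative with sliding fixed memory length L of the sine function satisfies (1/Γ(1−α)) ∫_{t−L}^{t} (t−τ)^{−α} cos τ dτ = a·sin(t−L) + b·cos(t−L), where a = L^{−α} ( E_{2,1−α}(−L²) − 1/Γ(1−α) ) and b = L^{1−α} E_{2,2−α}(−L²). -/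
open Real MeasureTheory intervalIntegral

/-- The generalized Mittag-Leffler function `E_{a,b}(x) = Σ_{k=0}^∞ x^k / Γ(ak + b)`. -/
noncomputable def mittagLeffler (a b x : ℝ) : ℝ :=
  ∑' k : ℕ, x ^ k / Real.Gamma (a * k + b)

open scoped Nat

/-- The Riemann-Liouville integral of a monomial, by the Beta integral. -/
lemma integral_sub_rpow_mul_pow {α L : ℝ} (hα : α < 1) (hL : 0 < L) (n : ℕ) :
    ∫ u in (0 : ℝ)..L, (L - u) ^ (-α) * u ^ n =
      L ^ (1 - α + n) * (Gamma (1 - α) * n ! / Gamma (2 - α + n)) := by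
  have hs : (0 : ℝ) < n + 1 := by positivity
  have ht : (0 : ℝ) < 1 - α := by linarith
  have h := Complex.betaIntegral_scaled ((n + 1 : ℝ) : ℂ) ((1 - α : ℝ) : ℂ) hL
  rw [Complex.betaIntegral_eq_Gamma_mul_div _ _ (by simpa using hs) (by simpa using ht),
    ← Complex.ofReal_add, Complex.Gamma_ofReal, Complex.Gamma_ofReal, Complex.Gamma_ofReal,
    ← Complex.ofReal_one, ← Complex.ofReal_sub, ← Complex.ofReal_sub, ← Complex.ofReal_sub,
    ← Complex.ofReal_cpow hL.le] at h
  have hcast : ∫ x in (0 : ℝ)..L, (x : ℂ) ^ ((n + 1 - 1 : ℝ) : ℂ) *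
      ((L : ℂ) - x) ^ ((1 - α - 1 : ℝ) : ℂ) =
      ((∫ u in (0 : ℝ)..L, (L - u) ^ (-α) * u ^ n : ℝ) : ℂ) := by
    rw [← intervalIntegral.integral_ofReal]
    refine intervalIntegral.integral_congr fun x hx => ?_
    rw [Set.uIcc_of_le hL.le] at hx
    have hx' : 0 ≤ L - x := sub_nonneg.2 hx.2
    rw [← Complex.ofReal_sub, ← Complex.ofReal_cpow hx.1, ← Complex.ofReal_cpow hx',
      ← Complex.ofReal_mul, add_sub_cancel_right, rpow_natCast,
      show 1 - α - 1 = -α by ring, mul_comm]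
  rw [hcast] at h
  have h' : ∫ u in (0 : ℝ)..L, (L - u) ^ (-α) * u ^ n =
      L ^ ((n : ℝ) + 1 + (1 - α) - 1) *
        (Gamma (n + 1) * Gamma (1 - α) / Gamma (n + 1 + (1 - α))) := by
    exact_mod_cast h
  rw [h', Gamma_nat_eq_factorial, show (n : ℝ) + 1 + (1 - α) - 1 = 1 - α + n by ring,
    show (n : ℝ) + 1 + (1 - α) = 2 - α + n by ring, mul_comm (n ! : ℝ)]

lemma intervalIntegrable_sub_rpow_neg {α : ℝ} (hα : α < 1) (L : ℝ) :
    IntervalIntegrable (fun u : ℝ => (L - u) ^ (-α)) volume 0 L := by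
  have := (intervalIntegrable_rpow' (a := 0) (b := L) (r := -α) (by linarith)).comp_sub_left L
  simpa using this.symm

/-- Termwise fractional integration of an alternating series such as those of `cos` and `sin`. -/
lemma hasSum_integral_sub_rpow_mul {α L : ℝ} (hα : α < 1) (hL : 0 < L) (j : ℕ) {f : ℝ → ℝ}
    (hf : ∀ u, HasSum (fun k : ℕ => (-1) ^ k * u ^ (2 * k + j) / ((2 * k + j)! : ℝ)) (f u)) :
    HasSum (fun k : ℕ => (-1) ^ k * L ^ (1 - α + (2 * k + j : ℕ)) / Gamma (2 - α + (2 * k + j : ℕ)))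
      (1 / Gamma (1 - α) * ∫ u in (0 : ℝ)..L, (L - u) ^ (-α) * f u) := by
  have hker := intervalIntegrable_sub_rpow_neg hα L
  have hsum : Summable fun k : ℕ => L ^ (2 * k + j) / ((2 * k + j)! : ℝ) :=
    (Real.summable_pow_div_factorial L).comp_injective
      (i := fun k : ℕ => 2 * k + j) fun a b hab => by simpa using hab
  have key := intervalIntegral.hasSum_integral_of_dominated_convergence (μ := volume)
    (a := 0) (b := L)
    (F := fun (k : ℕ) u => (L - u) ^ (-α) * ((-1) ^ k * u ^ (2 * k + j) / ((2 * k + j)! : ℝ)))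
    (f := fun u => (L - u) ^ (-α) * f u)
    (fun k u => (L - u) ^ (-α) * (L ^ (2 * k + j) / ((2 * k + j)! : ℝ)))
    (fun k => by
      have : Measurable fun u : ℝ =>
          (L - u) ^ (-α) * ((-1) ^ k * u ^ (2 * k + j) / ((2 * k + j)! : ℝ)) := by fun_prop
      exact this.aestronglyMeasurable)
    (fun k => Filter.Eventually.of_forall fun u hu => by
      rw [Set.uIoc_of_le hL.le] at hu
      have h0 : 0 ≤ (L - u) ^ (-α) := rpow_nonneg (sub_nonneg.2 hu.2) _
      rw [norm_mul, norm_div, norm_mul, norm_pow, norm_pow, norm_neg, norm_one, one_pow, one_mul,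
        Real.norm_of_nonneg h0, Real.norm_of_nonneg hu.1.le, RCLike.norm_natCast]
      have := hu.1.le
      have := hu.2
      gcongr)
    (Filter.Eventually.of_forall fun u _ => hsum.mul_left _)
    (by simpa only [tsum_mul_left] using hker.mul_const _)
    (Filter.Eventually.of_forall fun u _ => (hf u).mul_left _)
  have hG : Gamma (1 - α) ≠ 0 := (Gamma_pos_of_pos (by linarith)).ne'
  refine (key.mul_left (1 / Gamma (1 - α))).congr_fun fun k => ?_
  have hfac : ((2 * k + j)! : ℝ) ≠ 0 := by positivity
  have hterm : ∀ u : ℝ, (L - u) ^ (-α) * ((-1) ^ k * u ^ (2 * k + j) / ((2 * k + j)! : ℝ)) =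
      ((-1) ^ k / ((2 * k + j)! : ℝ)) * ((L - u) ^ (-α) * u ^ (2 * k + j)) := fun u => by ring
  simp_rw [hterm]
  rw [intervalIntegral.integral_const_mul, integral_sub_rpow_mul_pow hα hL]
  field_simp

/-- Exact value of the Caputo fractional derivative with sliding fixed
memory length `L` of the sine function:
`D_L^α sin(t) = a sin(t-L) + b cos(t-L)` with `a = L^{-α}(E_{2,1-α}(-L²) - 1/Γ(1-α))`
and `b = L^{1-α} E_{2,2-α}(-L²)`. -/
theorem caputo_sliding_memory_sin
    (α L : ℝ) (hα : α ∈ Set.Ioo (0 : ℝ) 1) (hL : 0 < L) :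
    ∀ t : ℝ,
      (1 / Real.Gamma (1 - α)) * ∫ τ in (t - L)..t, (t - τ) ^ (-α) * Real.cos τ
        = (L ^ (-α) * (mittagLeffler 2 (1 - α) (-(L ^ 2)) - 1 / Real.Gamma (1 - α))) *
            Real.sin (t - L)
          + (L ^ (1 - α) * mittagLeffler 2 (2 - α) (-(L ^ 2))) * Real.cos (t - L) := by
  intro t
  have hα1 : α < 1 := hα.2
  have hcos := hasSum_integral_sub_rpow_mul hα1 hL 0 (f := cos) (fun u => hasSum_cos u)
  have hsin := hasSum_integral_sub_rpow_mul hα1 hL 1 (f := sin) (fun u => hasSum_sin u)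
  have hker := intervalIntegrable_sub_rpow_neg hα1 L
  have hsplit : ∫ τ in (t - L)..t, (t - τ) ^ (-α) * cos τ =
      cos (t - L) * (∫ u in (0 : ℝ)..L, (L - u) ^ (-α) * cos u) -
        sin (t - L) * ∫ u in (0 : ℝ)..L, (L - u) ^ (-α) * sin u := by
    have hshift := intervalIntegral.integral_comp_add_right
      (a := 0) (b := L) (fun τ => (t - τ) ^ (-α) * cos τ) (t - L)
    rw [zero_add, add_sub_cancel] at hshift
    rw [← hshift, ← intervalIntegral.integral_const_mul, ← intervalIntegral.integral_const_mul,
      ← intervalIntegral.integral_sub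
        ((hker.mul_continuousOn continuous_cos.continuousOn).const_mul _)
        ((hker.mul_continuousOn continuous_sin.continuousOn).const_mul _)]
    refine intervalIntegral.integral_congr fun u _ => ?_
    rw [show t - (u + (t - L)) = L - u by ring, cos_add]
    ring
  have hb : L ^ (1 - α) * mittagLeffler 2 (2 - α) (-(L ^ 2)) =
      1 / Gamma (1 - α) * ∫ u in (0 : ℝ)..L, (L - u) ^ (-α) * cos u := by
    rw [← hcos.tsum_eq, mittagLeffler, ← tsum_mul_left]
    refine tsum_congr fun k => ?_
    rw [rpow_add_natCast hL.ne', neg_pow, ← pow_mul]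
    push_cast
    rw [show (2 : ℝ) * k + (2 - α) = 2 - α + (2 * k + 0) by ring]
    simp only [add_zero]
    ring
  have ha : L ^ (-α) * (mittagLeffler 2 (1 - α) (-(L ^ 2)) - 1 / Gamma (1 - α)) =
      -(1 / Gamma (1 - α) * ∫ u in (0 : ℝ)..L, (L - u) ^ (-α) * sin u) := by
    have hLα : L ^ (-α) ≠ 0 := (rpow_pos_of_pos hL _).ne'
    have hterm : ∀ k : ℕ, L ^ (-α) * ((-(L ^ 2)) ^ (k + 1) /
        Gamma (2 * (k + 1 : ℕ) + (1 - α))) =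
        -((-1) ^ k * L ^ (1 - α + (2 * k + 1 : ℕ)) / Gamma (2 - α + (2 * k + 1 : ℕ))) := by
      intro k
      rw [rpow_add_natCast hL.ne', sub_eq_add_neg 1 α, rpow_add hL, rpow_one, neg_pow, ← pow_mul]
      push_cast
      rw [show (2 : ℝ) * (k + 1) + (1 + -α) = 2 - α + (2 * k + 1) by ring]
      ring
    have hshift := hsin.neg.congr_fun hterm
    have hsummable : Summable fun k : ℕ => (-(L ^ 2)) ^ k / Gamma (2 * k + (1 - α)) :=
      (summable_nat_add_iff 1).1 ((summable_mul_left_iff hLα).1 hshift.summable)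
    rw [← hshift.tsum_eq, mittagLeffler, hsummable.tsum_eq_zero_add, tsum_mul_left]
    simp
  rw [hsplit, ha, hb]
  ring
end
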